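/- Assume the bilevel setting: g : ℝ^d × ℝ^p → ℝ is differentiable with ∇_x g and ∇_y g each L_g-Lipschitz in each variable; for every x, g(x,·) attains its minimum G(x) at y*(x), satisfies the μ-PL condition ‖∇_y g(x, y)‖² ≥ 2μ (g(x, y) − G(x)) and the quadratic growth condition g(x, y) − G(x) ≥ (μ/2)‖y − y*(x)‖² for all y, with 0 < μ ≤ L_g; G is differentiable with ∇G(x) = ∇_x g(x, y*(x)) and ∇G is L_G-Lipschitz with L_G ≥ max{L_g, L_g²/(2μ)}; F : ℝ^d → ℝ is differentiable with L_F-Lipschitz gradient; h : ℝ^d → ℝ is convex; Φ = F + h is bounded below by Φ* > −∞; and L̂, L̆, σ > 0. On a probability space, let random sequences (x_t, y_t, w_t, v_t, A_t, B_t)_{t=0}^{T} satisfy: A_t symmetric with A_t ⪰ ρ I_d; B_t symmetric with ρ_l I_p ⪯ B_t ⪯ ρ_u I_p, with ρ_l = ρ ∈ (0,1) and ρ_l ρ_u ≥ 1; x_{t+1} = argmin_{z}{ ⟨w_t, z⟩ + (1/(2γ))(z − x_t)ᵀ A_t (z − x_t) + h(z) }; y_{t+1} = y_t − λ B_t^{-1}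 v_t; and with b = q ∈ ℕ, epoch start s_t = q⌊t/q⌋ and n ∈ ℕ, the estimator error bounds E‖v_t − ∇_y g(x_t, y_t)‖² ≤ (2 L_g²/b) Σ_{i=s_t}^{t−1} E[‖x_{i+1} − x_i‖² + ‖y_{i+1} − y_i‖²] + σ²/n and E‖w_t − ∇F(x_t)‖² ≤ (4 L̂²/b) Σ_{i=s_t}^{t−1} E[‖x_{i+1} − x_i‖² + ‖y_{i+1} − y_i‖²] + (4 L̂²/μ) E[g(x_t, y_t) − G(x_t)] + L̆² σ²/n hold for all t. Suppose 0 < γ ≤ min{ 3ρ/(4 L_F), 4ρμ²λ/(19 L̂² ρ_u), ρ/(2√38 L̂²), ρ/(38 ρ_u λ L̂²), λρρ_u/4, λμρ_l/(16 L_G ρ_u), μρ_l/(16 L_g² ρ_u) } and 0 < λ ≤ min{ 1/(2 L_g ρ_u), √ρ_l/(4 √ρ_u L_g) }. For each t define 𝒢(x_t, ∇F(x_t), γ) = (x_t − x̄_{t+1})/γ, where x̄_{t+1} = argmin_{z}{ ⟨∇F(x_t), z⟩ + (1/(2γ))(z − x_t)ᵀ A_t (z − x_t) + h(z) }. Then (1/T)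 Σ_{t=0}^{T−1} E‖𝒢(x_t, ∇F(x_t), γ)‖² ≤ 32 ( Φ(x_0) − Φ* + g(x_0, y_0) − G(x_0) ) / (3 T γ ρ) + 38 L̆² σ² / (3 ρ² n) + 32 λ σ² / (3 ρ² γ n). -/

import Mathlib

open scoped RealInnerProductSpace
open MeasureTheory

section Helpers
variable {E : Type*} [NormedAddCommGroup E] [InnerProductSpace ℝ E] [CompleteSpace E]

/-- Descent lemma for functions with Lipschitz gradient. -/
lemma aux_descent (F : E → ℝ) (F' : E → E) (L : ℝ)
    (hF : ∀ z, HasGradientAt F (F' z) z)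
    (hL : ∀ a b, ‖F' a - F' b‖ ≤ L * ‖a - b‖) (a b : E) :
    F b ≤ F a + ⟪F' a, b - a⟫ + L / 2 * ‖b - a‖ ^ 2 := by
  set e := b - a with he
  have hder : ∀ s : ℝ, HasDerivAt
      (fun s : ℝ => F (a + s • e) - s * ⟪F' a, e⟫ - L / 2 * ‖e‖ ^ 2 * s ^ 2)
      (⟪F' (a + s • e), e⟫ - ⟪F' a, e⟫ - L * ‖e‖ ^ 2 * s) s := by
    intro s
    have h1 : HasDerivAt (fun s : ℝ => a + s • e) e s := by
      simpa using ((hasDerivAt_id s).smul_const e).const_add a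
    have h2 := (hF (a + s • e)).hasFDerivAt.comp_hasDerivAt s h1
    have h3 : HasDerivAt (fun s : ℝ => s * ⟪F' a, e⟫) ⟪F' a, e⟫ s := by
      simpa using (hasDerivAt_id s).mul_const ⟪F' a, e⟫
    have h4 : HasDerivAt (fun s : ℝ => L / 2 * ‖e‖ ^ 2 * s ^ 2) (L * ‖e‖ ^ 2 * s) s := by
      have := ((hasDerivAt_id s).pow 2).const_mul (L / 2 * ‖e‖ ^ 2)
      refine this.congr_deriv ?_
      simp only [id, Nat.cast_ofNat]; ring
    have h5 := (h2.sub h3).sub h4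
    refine HasDerivAt.congr_deriv (f := fun s : ℝ => F (a + s • e) - s * ⟪F' a, e⟫
      - L / 2 * ‖e‖ ^ 2 * s ^ 2) h5 ?_
    simp
  have hanti : AntitoneOn
      (fun s : ℝ => F (a + s • e) - s * ⟪F' a, e⟫ - L / 2 * ‖e‖ ^ 2 * s ^ 2)
      (Set.Icc 0 1) := by
    apply antitoneOn_of_deriv_nonpos (convex_Icc 0 1)
    · exact fun s _ => (hder s).continuousAt.continuousWithinAt
    · exact fun s _ => (hder s).differentiableAt.differentiableWithinAt
    · intro s hs
      rw [interior_Icc] at hs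
      rw [(hder s).deriv, ← inner_sub_left]
      have h1 : ⟪F' (a + s • e) - F' a, e⟫ ≤ ‖F' (a + s • e) - F' a‖ * ‖e‖ :=
        real_inner_le_norm _ _
      have h2 := hL (a + s • e) a
      have h3 : ‖a + s • e - a‖ = s * ‖e‖ := by
        rw [add_sub_cancel_left, norm_smul, Real.norm_of_nonneg hs.1.le]
      rw [h3] at h2
      nlinarith [norm_nonneg e, mul_le_mul_of_nonneg_right h2 (norm_nonneg e)]
  have := hanti (by simp : (0:ℝ) ∈ Set.Icc (0:ℝ) 1) (by simp : (1:ℝ) ∈ Set.Icc (0:ℝ) 1) zero_le_one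
  simp [he] at this
  simp [he]
  linarith

/-- First-order optimality (variational inequality) for the proximal step. -/
lemma aux_vi {E : Type*} [NormedAddCommGroup E] [InnerProductSpace ℝ E] (A : E →L[ℝ] E) (hsym : ∀ a b, ⟪A a, b⟫ = ⟪a, A b⟫) (h : E → ℝ)
    (hconv : ConvexOn ℝ Set.univ h) (w x xp : E) (γ : ℝ)
    (hmin : ∀ z, ⟪w, xp⟫ + (1 / (2 * γ)) * ⟪A (xp - x), xp - x⟫ + h xp
      ≤ ⟪w, z⟫ + (1 / (2 * γ)) * ⟪A (z - x), z - x⟫ + h z) (z : E) :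
    0 ≤ ⟪w, z - xp⟫ + (1 / γ) * ⟪A (xp - x), z - xp⟫ + h z - h xp := by
  set a := ⟪w, z - xp⟫ + (1 / γ) * ⟪A (xp - x), z - xp⟫ + h z - h xp with ha
  set b := (1 / (2 * γ)) * ⟪A (z - xp), z - xp⟫ with hb
  have key : ∀ s : ℝ, 0 < s → s ≤ 1 → 0 ≤ a + s * b := by
    intro s hs hs1
    have h1 := hmin (xp + s • (z - xp))
    have h2 := hconv.2 (Set.mem_univ xp) (Set.mem_univ z) (by linarith : 0 ≤ 1 - s) hs.le (by ring)
    have h3 : (1 - s) • xp + s • z = xp + s • (z - xp) := by module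
    rw [h3] at h2
    simp only [smul_eq_mul] at h2
    have h4 : xp + s • (z - xp) - x = (xp - x) + s • (z - xp) := by abel
    rw [h4] at h1
    have h5 : ⟪A (z - xp), xp - x⟫ = ⟪A (xp - x), z - xp⟫ := by
      rw [hsym, real_inner_comm]
    simp only [map_add, map_smul, inner_add_left, inner_add_right, inner_smul_left,
      inner_smul_right, h5] at h1
    simp only [conj_trivial] at h1
    have h6 : 0 ≤ s * (a + s * b) := by
      have e1 : (1 / γ) = 2 * (1 / (2 * γ)) := by
        rw [one_div, one_div, mul_inv]; ring
      rw [ha, hb, e1]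
      linarith
    exact nonneg_of_mul_nonneg_right h6 hs
  by_contra hneg
  push Not at hneg
  have hbp : 0 < |b| + 1 := by positivity
  have hs : 0 < min 1 (-a / (2 * (|b| + 1))) := by
    apply lt_min one_pos
    apply div_pos <;> linarith
  have h1 := key _ hs (min_le_left _ _)
  have h2 : min 1 (-a / (2 * (|b| + 1))) ≤ -a / (2 * (|b| + 1)) := min_le_right _ _
  rw [le_div_iff₀ (by positivity)] at h2
  nlinarith [le_abs_self b, mul_le_mul_of_nonneg_left (le_abs_self b) hs.le]

/-- One-step decrease of `Φ`. -/
lemma aux_phi (A : E →L[ℝ] E) (hsym : ∀ a b, ⟪A a, b⟫ = ⟪a, A b⟫) (ρ γ LF : ℝ)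
    (hρ : 0 < ρ) (hγ : 0 < γ) (hγ1 : γ ≤ 3 * ρ / (4 * LF))
    (hpos : ∀ v, ρ * ‖v‖ ^ 2 ≤ ⟪A v, v⟫) (h : E → ℝ)
    (hconv : ConvexOn ℝ Set.univ h) (F : E → ℝ) (F' : E → E)
    (hF : ∀ z, HasGradientAt F (F' z) z)
    (hL : ∀ a b, ‖F' a - F' b‖ ≤ LF * ‖a - b‖) (w x xp xb : E)
    (hmin : ∀ z, ⟪w, xp⟫ + (1 / (2 * γ)) * ⟪A (xp - x), xp - x⟫ + h xp
      ≤ ⟪w, z⟫ + (1 / (2 * γ)) * ⟪A (z - x), z - x⟫ + h z)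
    (hminb : ∀ z, ⟪F' x, xb⟫ + (1 / (2 * γ)) * ⟪A (xb - x), xb - x⟫ + h xb
      ≤ ⟪F' x, z⟫ + (1 / (2 * γ)) * ⟪A (z - x), z - x⟫ + h z) :
    F xp + h xp + (3 * γ * ρ / 32) * ‖γ⁻¹ • (x - xb)‖ ^ 2 + (1 / 4) * (ρ / γ) * ‖xp - x‖ ^ 2
      ≤ F x + h x + (γ / ρ) * ‖w - F' x‖ ^ 2 := by
  have hLF : 0 < LF := by
    by_contra hc
    push Not at hc
    have : 3 * ρ / (4 * LF) ≤ 0 := div_nonpos_of_nonneg_of_nonpos (by positivity) (by linarith)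
    linarith
  have hLF2 : LF ≤ 3 / 4 * (ρ / γ) := by
    rw [le_div_iff₀ (by positivity)] at hγ1
    have : 3 / 4 * (ρ / γ) = (3 * ρ / 4) / γ := by ring
    rw [this, le_div_iff₀ hγ]; linarith
  have v1 := aux_vi A hsym h hconv w x xp γ hmin x
  have v2 := aux_vi A hsym h hconv w x xp γ hmin xb
  have v3 := aux_vi A hsym h hconv (F' x) x xb γ hminb xp
  have hd := aux_descent F F' LF hF hL x xp
  -- abbreviations
  obtain ⟨d, hd'⟩ : ∃ d, d = xp - x := ⟨_, rfl⟩
  obtain ⟨z, hz'⟩ : ∃ z, z = xb - xp := ⟨_, rfl⟩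
  obtain ⟨δ, hδ'⟩ : ∃ δ, δ = F' x - w := ⟨_, rfl⟩
  have ex : x - xp = -d := by rw [hd']; abel
  have ez : xp - xb = -z := by rw [hz']; abel
  have exb : xb - x = d + z := by rw [hd', hz']; abel
  have exb' : x - xb = -(d + z) := by rw [hd', hz']; abel
  have eF : F' x = w + δ := by rw [hδ']; abel
  have ew : w - F' x = -δ := by rw [hδ']; abel
  rw [ex, ← hd'] at v1
  rw [← hd', ← hz'] at v2
  rw [ez, exb, eF] at v3
  rw [eF, ← hd'] at hd
  rw [exb', ew, ← hd']
  simp only [inner_neg_right, map_add, inner_add_left] at v1 v2 v3 hd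
  rw [norm_smul, norm_neg, norm_neg, mul_pow, Real.norm_eq_abs, sq_abs]
  have hg : 0 < 1 / γ := by positivity
  have p1 := mul_le_mul_of_nonneg_left (hpos d) hg.le
  have p2 := mul_le_mul_of_nonneg_left (hpos z) hg.le
  -- monotonicity
  have mono : (ρ / γ) * ‖z‖ ^ 2 + ⟪δ, z⟫ ≤ 0 := by
    have : (ρ / γ) * ‖z‖ ^ 2 = 1 / γ * (ρ * ‖z‖ ^ 2) := by ring
    rw [this]; linarith
  have dec : F xp + h xp ≤ F x + h x + ⟪δ, d⟫ - (5 / 8) * (ρ / γ) * ‖d‖ ^ 2 := by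
    have e1 : (ρ / γ) * ‖d‖ ^ 2 = 1 / γ * (ρ * ‖d‖ ^ 2) := by ring
    have e2 := mul_le_mul_of_nonneg_right hLF2 (sq_nonneg ‖d‖)
    linarith
  -- square bound
  obtain ⟨r, hr⟩ : ∃ r, r = ρ / γ := ⟨_, rfl⟩
  have hr0 : 0 < r := by rw [hr]; positivity
  have hri : γ / ρ = r⁻¹ := by rw [hr, inv_div]
  have hγr : 3 * γ * ρ / 32 * (γ⁻¹ ^ 2 * ‖d + z‖ ^ 2) = 3 / 32 * r * ‖d + z‖ ^ 2 := by
    rw [hr]; field_simp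
  rw [hγr, hri]
  rw [← hr] at mono dec ⊢
  have sqb : r ^ 2 * ‖d + z‖ ^ 2 ≤ 2 * r ^ 2 * ‖d‖ ^ 2 - 2 * r * ⟪δ, d⟫ + ‖δ‖ ^ 2 := by
    have n1 : 0 ≤ ‖r • d - δ - r • z‖ ^ 2 := sq_nonneg _
    rw [norm_sub_sq_real, norm_sub_sq_real, norm_smul, norm_smul, inner_sub_left] at n1
    simp only [inner_smul_left, inner_smul_right, conj_trivial, mul_pow, Real.norm_eq_abs,
      sq_abs] at n1
    rw [norm_add_sq_real]
    rw [real_inner_comm δ d] at n1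
    have := mul_nonneg hr0.le (neg_nonneg.2 mono)
    nlinarith
  have cs : ⟪δ, d⟫ ≤ ‖δ‖ * ‖d‖ := real_inner_le_norm _ _
  -- multiply the goal by r
  rw [← sub_nonneg]
  have hfin : 0 ≤ r * (F x + h x + r⁻¹ * ‖δ‖ ^ 2
      - (F xp + h xp + 3 / 32 * r * ‖d + z‖ ^ 2 + 1 / 4 * r * ‖d‖ ^ 2)) := by
    have e : r * (F x + h x + r⁻¹ * ‖δ‖ ^ 2
      - (F xp + h xp + 3 / 32 * r * ‖d + z‖ ^ 2 + 1 / 4 * r * ‖d‖ ^ 2))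
      = r * (F x + h x - (F xp + h xp)) + ‖δ‖ ^ 2 - 3 / 32 * (r ^ 2 * ‖d + z‖ ^ 2)
        - 1 / 4 * r ^ 2 * ‖d‖ ^ 2 := by
      field_simp
      ring
    rw [e]
    have d2 := mul_le_mul_of_nonneg_left dec hr0.le
    have c2 := mul_le_mul_of_nonneg_left cs hr0.le
    nlinarith [sq_nonneg (13 * (r * ‖d‖) - 28 * ‖δ‖), sq_nonneg (r * ‖d‖ - 2 * ‖δ‖), sq_nonneg (r * ‖d‖), sq_nonneg ‖δ‖]
  exact nonneg_of_mul_nonneg_right hfin hr0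

/-- One preconditioned gradient step. -/
lemma aux_precond {E : Type*} [NormedAddCommGroup E] [InnerProductSpace ℝ E]
    [FiniteDimensional ℝ E] (B : E →L[ℝ] E) (hsym : ∀ a b, ⟪B a, b⟫ = ⟪a, B b⟫)
    (ρ ρu lam : ℝ) (hρ : 0 < ρ) (hρu : 0 < ρu) (hlam : 0 < lam)
    (hl : ∀ v, ρ * ‖v‖ ^ 2 ≤ ⟪B v, v⟫) (hu : ∀ v, ⟪B v, v⟫ ≤ ρu * ‖v‖ ^ 2)
    (a v η : E) (hη : B η = lam • v) :
    -⟪a, η⟫ ≤ -(3 / 5) * (lam / ρu) * ‖a‖ ^ 2 - (3 / 8) * (ρ / lam) * ‖η‖ ^ 2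
      + (lam / ρ) * ‖v - a‖ ^ 2 := by
  have hinj : Function.Injective (B : E →ₗ[ℝ] E) := by
    rw [← LinearMap.ker_eq_bot, LinearMap.ker_eq_bot']
    intro m hm
    have hm' : B m = 0 := hm
    have := hl m
    rw [hm', inner_zero_left] at this
    have h2 : ‖m‖ ^ 2 ≤ 0 := by
      by_contra hc
      push Not at hc
      nlinarith
    have h3 : ‖m‖ = 0 := by nlinarith [norm_nonneg m]
    exact norm_eq_zero.1 h3
  obtain ⟨ζ, hζ⟩ := (LinearMap.injective_iff_surjective.1 hinj) (lam • a)
  replace hζ : B ζ = lam • a := hζ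
  -- B-norm squares
  have hpsd : ∀ v, 0 ≤ ⟪B v, v⟫ := fun v => le_trans (by positivity) (hl v)
  -- lower bound of the B-norm of ζ
  have hζa : lam ^ 2 * ‖a‖ ^ 2 ≤ ρu * ⟪B ζ, ζ⟫ := by
    have h1 := hpsd (ρu • ζ - B ζ)
    have h2 := hu (B ζ)
    simp only [map_sub, map_smul, inner_sub_left, inner_sub_right, inner_smul_left,
      inner_smul_right, conj_trivial] at h1
    rw [hsym (B ζ) ζ, real_inner_self_eq_norm_sq] at h1
    have h3 : ‖B ζ‖ ^ 2 = lam ^ 2 * ‖a‖ ^ 2 := by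
      rw [hζ, norm_smul, mul_pow, Real.norm_eq_abs, sq_abs]
    rw [← h3]
    have h4 : 0 ≤ ρu * (ρu * ⟪B ζ, ζ⟫ - ‖B ζ‖ ^ 2) := by nlinarith
    linarith [nonneg_of_mul_nonneg_right h4 hρu]
  -- error
  have hu1 : B (η - ζ) = lam • (v - a) := by rw [map_sub, hη, hζ, smul_sub]
  have herr : ρ * ⟪B (η - ζ), η - ζ⟫ ≤ lam ^ 2 * ‖v - a‖ ^ 2 := by
    have h1 := hl (η - ζ)
    have h2 : ⟪B (η - ζ), η - ζ⟫ ≤ lam * ‖v - a‖ * ‖η - ζ‖ := by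
      have := real_inner_le_norm (B (η - ζ)) (η - ζ)
      rw [hu1, norm_smul, Real.norm_of_nonneg hlam.le] at this
      rw [hu1]; exact this
    have h3 : ρ * ⟪B (η - ζ), η - ζ⟫ ≤ ρ * (lam * ‖v - a‖ * ‖η - ζ‖) :=
      mul_le_mul_of_nonneg_left h2 hρ.le
    nlinarith [sq_nonneg (lam * ‖v - a‖ - ρ * ‖η - ζ‖),
      mul_le_mul_of_nonneg_left (h1.trans h2) hρ.le]
  have hη1 := hl η
  have hcomb := hpsd ((4:ℝ) • ζ - (5:ℝ) • η)
  have hsw : ⟪B η, ζ⟫ = ⟪B ζ, η⟫ := by rw [hsym, real_inner_comm]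
  simp only [map_sub, map_smul, inner_sub_left, inner_sub_right, inner_smul_left,
      inner_smul_right, conj_trivial, hsw] at hcomb herr
  have hin : ⟪B ζ, η⟫ = lam * ⟪a, η⟫ := by
    rw [hζ, inner_smul_left]; simp
  rw [hin] at hcomb herr
  have t1 : lam / ρu * ‖a‖ ^ 2 ≤ ⟪B ζ, ζ⟫ / lam := by
    rw [le_div_iff₀ hlam, div_mul_eq_mul_div, div_mul_eq_mul_div, div_le_iff₀ hρu]
    nlinarith
  have t2 : (ρ / lam) * ‖η‖ ^ 2 ≤ ⟪B η, η⟫ / lam := by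
    rw [div_mul_eq_mul_div]; exact div_le_div_of_nonneg_right hη1 hlam.le
  have t3 : (⟪B η, η⟫ - 2 * (lam * ⟪a, η⟫) + ⟪B ζ, ζ⟫) / lam ≤ (lam / ρ) * ‖v - a‖ ^ 2 := by
    rw [div_le_iff₀ hlam, div_mul_eq_mul_div, div_mul_eq_mul_div, le_div_iff₀ hρ]
    nlinarith
  have t4 : 0 ≤ (16 * ⟪B ζ, ζ⟫ - 40 * (lam * ⟪a, η⟫) + 25 * ⟪B η, η⟫) / lam :=
    div_nonneg (by linarith) hlam.le
  have e3 : (⟪B η, η⟫ - 2 * (lam * ⟪a, η⟫) + ⟪B ζ, ζ⟫) / lam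
      = ⟪B η, η⟫ / lam - 2 * ⟪a, η⟫ + ⟪B ζ, ζ⟫ / lam := by field_simp
  have e4 : (16 * ⟪B ζ, ζ⟫ - 40 * (lam * ⟪a, η⟫) + 25 * ⟪B η, η⟫) / lam
      = 16 * (⟪B ζ, ζ⟫ / lam) - 40 * ⟪a, η⟫ + 25 * (⟪B η, η⟫ / lam) := by field_simp
  rw [e3] at t3
  rw [e4] at t4
  linarith

end Helpers

/-- Counting lemma for epochs. -/
lemma aux_epoch (q T : ℕ) (hq : 0 < q) (D : ℕ → ℝ) (hD : ∀ i, 0 ≤ D i) :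
    ∑ t ∈ Finset.range T, ∑ i ∈ Finset.Ico (q * (t / q)) t, D i
      ≤ q * ∑ t ∈ Finset.range T, D t := by
  have h1 : ∀ t ∈ Finset.range T, ∑ i ∈ Finset.Ico (q * (t / q)) t, D i
      = ∑ i ∈ Finset.range T, if (q * (t / q) ≤ i ∧ i < t) then D i else 0 := by
    intro t ht
    rw [← Finset.sum_filter]
    apply Finset.sum_congr _ (fun _ _ => rfl)
    ext i
    simp only [Finset.mem_Ico, Finset.mem_filter, Finset.mem_range] at *
    omega
  rw [Finset.sum_congr rfl h1, Finset.sum_comm, Finset.mul_sum]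
  apply Finset.sum_le_sum
  intro i _
  rw [← Finset.sum_filter, Finset.sum_const, nsmul_eq_mul]
  apply mul_le_mul_of_nonneg_right _ (hD i)
  have : (Finset.filter (fun t => q * (t / q) ≤ i ∧ i < t) (Finset.range T))
      ⊆ Finset.Ioc i (i + q) := by
    intro t ht
    simp only [Finset.mem_filter, Finset.mem_range, Finset.mem_Ioc] at *
    have := Nat.mod_lt t hq
    have := Nat.div_add_mod t q
    omega
  have := Finset.card_le_card this
  rw [Nat.card_Ioc] at this
  have h3 : (Finset.filter (fun t => q * (t / q) ≤ i ∧ i < t) (Finset.range T)).card ≤ q := by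
    omega
  exact_mod_cast h3

/-- Step-size consequences. -/
lemma aux_steps (μ Lg LG Lhat ρ ρu γ lam : ℝ)
    (hμ : 0 < μ) (hμLg : μ ≤ Lg) (hLG : max Lg (Lg ^ 2 / (2 * μ)) ≤ LG)
    (hLhat : 0 < Lhat)
    (hρ : 0 < ρ) (hρ1 : ρ < 1) (hρu : 0 < ρu) (hρρu : 1 ≤ ρ * ρu)
    (hγ : 0 < γ)
    (hγ2 : γ ≤ 4 * ρ * μ ^ 2 * lam / (19 * Lhat ^ 2 * ρu))
    (hγ6 : γ ≤ lam * μ * ρ / (16 * LG * ρu))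
    (hlam : 0 < lam)
    (hlam2 : lam ≤ Real.sqrt ρ / (4 * Real.sqrt ρu * Lg)) :
    (8 / 3 * (Lg ^ 2 * (γ / ρ)) / μ + 4 * Lhat ^ 2 / μ * (γ / ρ) ≤ 6 / 5 * (lam / ρu) * μ) ∧
    (16 * (Lg ^ 2 * (γ / ρ)) + Lg / 2 + (4 * Lhat ^ 2 * (γ / ρ) + 2 * Lg ^ 2 * (lam / ρ))
      ≤ 3 / 8 * (ρ / lam)) ∧
    (4 * Lhat ^ 2 * (γ / ρ) + 2 * Lg ^ 2 * (lam / ρ) ≤ 1 / 32 * (ρ / γ)) ∧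
    ((Lg + LG) / 2 ≤ 1 / 64 * (ρ / γ)) := by
  have hLg : 0 < Lg := lt_of_lt_of_le hμ hμLg
  have hLG1 : Lg ≤ LG := le_trans (le_max_left _ _) hLG
  have hLG2 : Lg ^ 2 ≤ 2 * μ * LG := by
    have := le_trans (le_max_right _ _) hLG
    rw [div_le_iff₀ (by positivity)] at this; linarith
  have hLG0 : 0 < LG := lt_of_lt_of_le hLg hLG1
  have hρu1 : 1 ≤ ρu := by nlinarith
  -- ratios
  obtain ⟨r, hr⟩ : ∃ r, r = γ / ρ := ⟨_, rfl⟩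
  have hr0 : 0 < r := by rw [hr]; positivity
  have hri : ρ / γ = r⁻¹ := by rw [hr, inv_div]
  obtain ⟨k, hk⟩ : ∃ k, k = lam / ρu := ⟨_, rfl⟩
  have hk0 : 0 < k := by rw [hk]; positivity
  have hkl : k ≤ lam := by rw [hk]; exact div_le_self hlam.le hρu1
  -- γ2
  have g2 : Lhat ^ 2 * r ≤ 4 / 19 * (μ ^ 2 * k) := by
    rw [le_div_iff₀ (by positivity)] at hγ2
    rw [hr, hk]
    rw [mul_div_assoc', mul_div_assoc', mul_div_assoc', div_le_div_iff₀ hρ hρu]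
    linarith
  -- γ6
  have g6 : LG * r ≤ k * μ / 16 := by
    rw [le_div_iff₀ (by positivity)] at hγ6
    rw [hr, hk]
    rw [mul_div_assoc', div_mul_eq_mul_div, div_div, div_le_div_iff₀ hρ (by positivity)]
    linarith
  -- lam2
  have hs : (lam * Lg) ^ 2 ≤ ρ / (16 * ρu) := by
    have h1 : lam * Lg ≤ Real.sqrt ρ / (4 * Real.sqrt ρu) := by
      have hsq : 0 < Real.sqrt ρu := Real.sqrt_pos.2 hρu
      rw [le_div_iff₀ (by positivity)] at hlam2 ⊢
      linarith
    have h2 := pow_le_pow_left₀ (by positivity) h1 2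
    rw [div_pow, mul_pow 4, Real.sq_sqrt hρ.le, Real.sq_sqrt hρu.le] at h2
    have e : (4:ℝ) ^ 2 = 16 := by norm_num
    rw [e] at h2
    exact h2
  have hiu : 1 / ρu ≤ ρ := by rw [div_le_iff₀ hρu]; linarith
  have hs2 : (lam * Lg) ^ 2 ≤ ρ / 16 * (1 / ρu) := by
    have : ρ / 16 * (1 / ρu) = ρ / (16 * ρu) := by field_simp
    rw [this]; exact hs
  have hs3 : (lam * Lg) ^ 2 ≤ (ρ / 4) ^ 2 := by nlinarith
  have hs4 : lam * Lg ≤ ρ / 4 := (abs_le_of_sq_le_sq hs3 (by positivity)).trans' (le_abs_self _)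
  have hkl2 : k * lam = lam ^ 2 * (1 / ρu) := by rw [hk]; ring
  have hrk : r ≤ k / 16 := by
    have : μ * r ≤ μ * (k / 16) := by nlinarith
    exact le_of_mul_le_mul_left this hμ
  have hμ2 : μ ^ 2 ≤ Lg ^ 2 := by nlinarith
  have hrl : r ≤ lam / 16 := by linarith
  have hklg : k * lam * Lg ^ 2 ≤ ρ / 16 := by
    have : k * lam * Lg ^ 2 ≤ lam * lam * Lg ^ 2 := by gcongr
    have h2 : ρ / 16 * (1 / ρu) ≤ ρ / 16 * 1 := by
      apply mul_le_mul_of_nonneg_left _ (by positivity)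
      linarith
    have h3 : lam * lam * Lg ^ 2 = (lam * Lg) ^ 2 := by ring
    linarith
  -- C bounds times lam
  have c1 : lam * (4 * Lhat ^ 2 * r) ≤ ρ / 19 := by
    have h1 : lam * (Lhat ^ 2 * r) ≤ lam * (4 / 19 * (μ ^ 2 * k)) := by gcongr
    have h2 : lam * k * μ ^ 2 ≤ lam * k * Lg ^ 2 := by gcongr
    linarith
  have c2 : lam * (2 * Lg ^ 2 * (lam / ρ)) ≤ 1 / 8 * (1 / ρu) := by
    have h1 : lam * (2 * Lg ^ 2 * (lam / ρ)) = 2 * (lam * Lg) ^ 2 / ρ := by ring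
    rw [h1, div_le_iff₀ hρ]; linarith
  rw [← hr, ← hk, hri]
  refine ⟨?_, ?_, ?_, ?_⟩
  · rw [← sub_nonneg]
    have e : 6 / 5 * k * μ - (8 / 3 * (Lg ^ 2 * r) / μ + 4 * Lhat ^ 2 / μ * r)
      = (6 / 5 * k * μ ^ 2 - 8 / 3 * (Lg ^ 2 * r) - 4 * (Lhat ^ 2 * r)) / μ := by
      field_simp
      ring
    rw [e]
    apply div_nonneg _ hμ.le
    have h1 : Lg ^ 2 * r ≤ 2 * μ * LG * r := by gcongr
    have h2 : 2 * μ * (LG * r) ≤ 2 * μ * (k * μ / 16) := by gcongr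
    linarith [mul_pos hk0 (pow_pos hμ 2)]
  · have e : 3 / 8 * (ρ / lam) = (3 / 8 * ρ) / lam := by ring
    rw [e, le_div_iff₀ hlam]
    have h1 : Lg ^ 2 * r * lam ≤ Lg ^ 2 * (k / 16) * lam := by gcongr
    linarith
  · have h1 : lam * (4 * Lhat ^ 2 * r + 2 * Lg ^ 2 * (lam / ρ)) ≤ 1 / 4 := by
      have : 1 / ρu ≤ 1 := by linarith
      linarith
    have hC : 0 ≤ 4 * Lhat ^ 2 * r + 2 * Lg ^ 2 * (lam / ρ) := by positivity
    rw [← div_eq_mul_inv, le_div_iff₀ hr0]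
    have h2 : (4 * Lhat ^ 2 * r + 2 * Lg ^ 2 * (lam / ρ)) * r
      ≤ (4 * Lhat ^ 2 * r + 2 * Lg ^ 2 * (lam / ρ)) * (lam / 16) := by gcongr
    linarith
  · rw [← div_eq_mul_inv, le_div_iff₀ hr0]
    have h1 : k * μ ≤ lam * Lg := by gcongr
    have h2 : Lg * r ≤ LG * r := by gcongr
    linarith

/-- One-step decrease of the lower-level gap. -/
lemma aux_theta {E H : Type*} [NormedAddCommGroup E] [InnerProductSpace ℝ E] [CompleteSpace E]
    [NormedAddCommGroup H] [InnerProductSpace ℝ H] [CompleteSpace H] [FiniteDimensional ℝ H]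
    (μ Lg LG ρ ρu γ lam C c : ℝ)
    (hμ : 0 < μ) (hLg : 0 < Lg) (hρ : 0 < ρ) (hρu : 0 < ρu) (hγ : 0 < γ) (hlam : 0 < lam)
    (g : E → H → ℝ) (gx : E → H → E) (gy : E → H → H)
    (hgx : ∀ x y, HasGradientAt (fun x' => g x' y) (gx x y) x)
    (hgy : ∀ x y, HasGradientAt (fun y' => g x y') (gy x y) y)
    (hgxlipy : ∀ x y₁ y₂, ‖gx x y₁ - gx x y₂‖ ≤ Lg * ‖y₁ - y₂‖)
    (hgxlipx : ∀ x₁ x₂ y, ‖gx x₁ y - gx x₂ y‖ ≤ Lg * ‖x₁ - x₂‖)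
    (hgylipy : ∀ x y₁ y₂, ‖gy x y₁ - gy x y₂‖ ≤ Lg * ‖y₁ - y₂‖)
    (G : E → ℝ) (ystar : E → H)
    (hPL : ∀ x y, ‖gy x y‖ ^ 2 ≥ 2 * μ * (g x y - G x))
    (hQG : ∀ x y, g x y - G x ≥ (μ / 2) * ‖y - ystar x‖ ^ 2)
    (hGgrad : ∀ x, HasGradientAt G (gx x (ystar x)) x)
    (hGlip : ∀ x₁ x₂, ‖gx x₁ (ystar x₁) - gx x₂ (ystar x₂)‖ ≤ LG * ‖x₁ - x₂‖)
    (B : H →L[ℝ] H) (hsym : ∀ a b, ⟪B a, b⟫ = ⟪a, B b⟫)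
    (hl : ∀ v, ρ * ‖v‖ ^ 2 ≤ ⟪B v, v⟫) (hu : ∀ v, ⟪B v, v⟫ ≤ ρu * ‖v‖ ^ 2)
    (x xp : E) (y yp v : H) (hy : B (y - yp) = lam • v)
    (s1 : 8 / 3 * (Lg ^ 2 * (γ / ρ)) / μ + c ≤ 6 / 5 * (lam / ρu) * μ)
    (s2 : 16 * (Lg ^ 2 * (γ / ρ)) + Lg / 2 + C ≤ 3 / 8 * (ρ / lam))
    (s3 : C ≤ 1 / 32 * (ρ / γ))
    (s4 : (Lg + LG) / 2 ≤ 1 / 64 * (ρ / γ)) :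
    g xp yp - G xp + C * (‖xp - x‖ ^ 2 + ‖yp - y‖ ^ 2) + c * (g x y - G x)
      ≤ g x y - G x + (1 / 4) * (ρ / γ) * ‖xp - x‖ ^ 2
        + (lam / ρ) * ‖v - gy x y‖ ^ 2 := by
  have d1 := aux_descent (fun x' => g x' yp) (fun x' => gx x' yp) Lg (fun z => hgx z yp)
    (fun a b => hgxlipx a b yp) x xp
  have d2 := aux_descent (fun y' => g x y') (fun y' => gy x y') Lg (fun z => hgy x z)
    (fun a b => hgylipy x a b) y yp
  have d3 := aux_descent (fun x' => - G x') (fun x' => - gx x' (ystar x')) LG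
    (fun z => by
      have := (hGgrad z).hasFDerivAt.neg
      rw [hasGradientAt_iff_hasFDerivAt]
      refine this.congr_fderiv ?_
      simp)
    (fun a b => by
      rw [neg_sub_neg, norm_sub_rev a b]; exact hGlip b a) x xp
  have pc := aux_precond B hsym ρ ρu lam hρ hρu hlam hl hu (gy x y) v (y - yp) hy
  have npc : ⟪gy x y, yp - y⟫ = -⟪gy x y, y - yp⟫ := by
    rw [← inner_neg_right, neg_sub]
  rw [norm_sub_rev y yp] at pc
  simp only [inner_neg_left] at d1 d2 d3
  have i1 : ⟪gx x yp, xp - x⟫ - ⟪gx x (ystar x), xp - x⟫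
      ≤ Lg * ‖yp - y‖ * ‖xp - x‖ + Lg * ‖y - ystar x‖ * ‖xp - x‖ := by
    have e : ⟪gx x yp, xp - x⟫ - ⟪gx x (ystar x), xp - x⟫
      = ⟪gx x yp - gx x y, xp - x⟫ + ⟪gx x y - gx x (ystar x), xp - x⟫ := by
      simp only [inner_sub_left]; ring
    rw [e]
    refine add_le_add ((real_inner_le_norm _ _).trans ?_) ((real_inner_le_norm _ _).trans ?_)
    · exact mul_le_mul_of_nonneg_right (hgxlipy _ _ _) (norm_nonneg _)
    · exact mul_le_mul_of_nonneg_right (hgxlipy _ _ _) (norm_nonneg _)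
  have hpl := hPL x y
  have hqg := hQG x y
  obtain ⟨X, hX⟩ : ∃ X, X = ‖xp - x‖ := ⟨_, rfl⟩
  obtain ⟨Y, hY⟩ : ∃ Y, Y = ‖yp - y‖ := ⟨_, rfl⟩
  obtain ⟨S, hS⟩ : ∃ S, S = ‖y - ystar x‖ := ⟨_, rfl⟩
  obtain ⟨Θ, hΘ⟩ : ∃ Θ, Θ = g x y - G x := ⟨_, rfl⟩
  obtain ⟨r, hr⟩ : ∃ r, r = γ / ρ := ⟨_, rfl⟩
  have hr0 : 0 < r := by rw [hr]; positivity
  have hri : ρ / γ = r⁻¹ := by rw [hr, inv_div]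
  have hΘ0 : 0 ≤ Θ := by rw [hΘ]; exact le_trans (by positivity) hqg
  rw [hri] at s3 s4 ⊢
  rw [← hr] at s1 s2
  rw [← hX, ← hY, ← hS] at i1
  rw [← hX] at d1 d3 ⊢
  rw [← hY] at d2 pc ⊢
  rw [← hΘ] at hpl hqg ⊢
  rw [← hS] at hqg
  have young : ∀ (k a b : ℝ), 0 < k → Lg * a * b ≤ k * r⁻¹ * b ^ 2 + 1 / (4 * k) * (Lg ^ 2 * r) * a ^ 2 := by
    intro k a b hk
    have : 0 ≤ (1 / (4 * k * r)) * (2 * k * b - Lg * r * a) ^ 2 := by positivity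
    have e : (1 / (4 * k * r)) * (2 * k * b - Lg * r * a) ^ 2
      = k * r⁻¹ * b ^ 2 + 1 / (4 * k) * (Lg ^ 2 * r) * a ^ 2 - Lg * a * b := by
      field_simp; ring
    linarith
  have y1 := young (1 / 64) Y X (by norm_num)
  have y2 := young (3 / 16) S X (by norm_num)
  norm_num at y1 y2
  have q1 : 4 / 3 * (Lg ^ 2 * r) * S ^ 2 ≤ 8 / 3 * (Lg ^ 2 * r) / μ * Θ := by
    have h1 : S ^ 2 ≤ 2 / μ * Θ := by
      rw [div_mul_eq_mul_div, le_div_iff₀ hμ]; linarith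
    have h2 := mul_le_mul_of_nonneg_left h1 (by positivity : 0 ≤ 4 / 3 * (Lg ^ 2 * r))
    refine h2.trans (le_of_eq ?_)
    ring
  have q2 := mul_le_mul_of_nonneg_right s1 hΘ0
  have q3 := mul_le_mul_of_nonneg_right s2 (sq_nonneg Y)
  have q4 := mul_le_mul_of_nonneg_right s3 (sq_nonneg X)
  have q5 := mul_le_mul_of_nonneg_right s4 (sq_nonneg X)
  have q6 := mul_le_mul_of_nonneg_left hpl (by positivity : 0 ≤ lam / ρu)
  have hXr : 0 ≤ r⁻¹ * X ^ 2 := by positivity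
  have final : g xp yp - G xp ≤ Θ + (Lg * Y * X + Lg * S * X) + Lg / 2 * X ^ 2 + Lg / 2 * Y ^ 2
      + LG / 2 * X ^ 2 + (-(3 / 5) * (lam / ρu) * ‖gy x y‖ ^ 2 - (3 / 8) * (ρ / lam) * Y ^ 2
      + (lam / ρ) * ‖v - gy x y‖ ^ 2) := by
    linarith
  linarith

/-- Linearity of the integral for five terms. -/
lemma aux_integral {Ω : Type*} [MeasurableSpace Ω] (P : Measure Ω) {f₁ f₂ f₃ f₄ f₅ : Ω → ℝ}
    (h₁ : Integrable f₁ P) (h₂ : Integrable f₂ P) (h₃ : Integrable f₃ P) (h₄ : Integrable f₄ P)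
    (h₅ : Integrable f₅ P) (a b c d e : ℝ) :
    ∫ ω, (a * f₁ ω + b * f₂ ω + c * f₃ ω - d * f₄ ω - e * f₅ ω) ∂P
      = a * (∫ ω, f₁ ω ∂P) + b * (∫ ω, f₂ ω ∂P) + c * (∫ ω, f₃ ω ∂P) - d * (∫ ω, f₄ ω ∂P)
        - e * (∫ ω, f₅ ω ∂P) := by
  have I1 := h₁.const_mul a
  have I2 := h₂.const_mul b
  have I3 := h₃.const_mul c
  have I4 := h₄.const_mul d
  have I5 := h₅.const_mul e
  have J2 : Integrable (fun ω => a * f₁ ω + b * f₂ ω) P := I1.add I2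
  have J3 : Integrable (fun ω => a * f₁ ω + b * f₂ ω + c * f₃ ω) P := J2.add I3
  have J4 : Integrable (fun ω => a * f₁ ω + b * f₂ ω + c * f₃ ω - d * f₄ ω) P := J3.sub I4
  rw [integral_sub J4 I5, integral_sub J3 I4, integral_add J2 I3, integral_add I1 I2]
  simp only [integral_const_mul]

/-- (Theorem 3 of the paper.) Convergence of AdaVSPAG: under the bilevel
smoothness/PL/quadratic-growth assumptions, the adaptive mirror-descent updates with
variance-reduced SARAH/SPIDER estimators `w_t` of `∇F(x_t)` and `v_t` of `∇_y g(x_t,y_t)`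
satisfying the epoch-wise mean-square error bounds (Lemmas B2/B3), batch size `b = q`,
epoch starts `s_t = q⌊t/q⌋`, the stated step-size restrictions, and `Φ = F + h` bounded
below by `Φ*`, the averaged expected squared gradient mapping satisfies
`(1/T) Σ_{t=0}^{T−1} E‖𝒢(x_t,∇F(x_t),γ)‖² ≤ 32(Φ(x_0) − Φ* + g(x_0,y_0) − G(x_0))/(3Tγρ)
 + 38 L̆² σ²/(3ρ² n) + 32 λ σ²/(3 ρ² γ n)`. -/
theorem stmt_19 {d p : ℕ} {Ω : Type*} [mΩ : MeasurableSpace Ω]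
    (μP : Measure Ω) [IsProbabilityMeasure μP]
    (μ Lg LG LF Lhat Lbrev σ ρ ρu γ lam Φstar : ℝ) (T n q : ℕ)
    (hT : 0 < T) (hn : 0 < n) (hq : 0 < q)
    (hμ : 0 < μ) (hμLg : μ ≤ Lg) (hLG : max Lg (Lg ^ 2 / (2 * μ)) ≤ LG)
    (hLhat : 0 < Lhat) (hLbrev : 0 < Lbrev) (hσ : 0 < σ)
    (hρ : 0 < ρ) (hρ1 : ρ < 1) (hρu : 0 < ρu) (hρρu : 1 ≤ ρ * ρu)
    -- lower-level objective, its partial gradients and value function: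
    (g : EuclideanSpace ℝ (Fin d) → EuclideanSpace ℝ (Fin p) → ℝ)
    (gx : EuclideanSpace ℝ (Fin d) → EuclideanSpace ℝ (Fin p) → EuclideanSpace ℝ (Fin d))
    (gy : EuclideanSpace ℝ (Fin d) → EuclideanSpace ℝ (Fin p) → EuclideanSpace ℝ (Fin p))
    (hgx : ∀ x y, HasGradientAt (fun x' => g x' y) (gx x y) x)
    (hgy : ∀ x y, HasGradientAt (fun y' => g x y') (gy x y) y)
    (hgxlipy : ∀ x y₁ y₂, ‖gx x y₁ - gx x y₂‖ ≤ Lg * ‖y₁ - y₂‖)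
    (hgxlipx : ∀ x₁ x₂ y, ‖gx x₁ y - gx x₂ y‖ ≤ Lg * ‖x₁ - x₂‖)
    (hgylipy : ∀ x y₁ y₂, ‖gy x y₁ - gy x y₂‖ ≤ Lg * ‖y₁ - y₂‖)
    (hgylipx : ∀ x₁ x₂ y, ‖gy x₁ y - gy x₂ y‖ ≤ Lg * ‖x₁ - x₂‖)
    (G : EuclideanSpace ℝ (Fin d) → ℝ)
    (ystar : EuclideanSpace ℝ (Fin d) → EuclideanSpace ℝ (Fin p))
    (hGval : ∀ x, g x (ystar x) = G x) (hGlow : ∀ x y, G x ≤ g x y)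
    (hPL : ∀ x y, ‖gy x y‖ ^ 2 ≥ 2 * μ * (g x y - G x))
    (hQG : ∀ x y, g x y - G x ≥ (μ / 2) * ‖y - ystar x‖ ^ 2)
    (hGgrad : ∀ x, HasGradientAt G (gx x (ystar x)) x)
    (hGlip : ∀ x₁ x₂, ‖gx x₁ (ystar x₁) - gx x₂ (ystar x₂)‖ ≤ LG * ‖x₁ - x₂‖)
    -- upper-level objective and regularizer, `Φ = F + h` bounded below by `Φ*`:
    (F : EuclideanSpace ℝ (Fin d) → ℝ)
    (F' : EuclideanSpace ℝ (Fin d) → EuclideanSpace ℝ (Fin d))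
    (hF : ∀ z, HasGradientAt F (F' z) z)
    (hFlip : ∀ z₁ z₂, ‖F' z₁ - F' z₂‖ ≤ LF * ‖z₁ - z₂‖)
    (h : EuclideanSpace ℝ (Fin d) → ℝ) (hconv : ConvexOn ℝ Set.univ h)
    (hΦstar : ∀ z, Φstar ≤ F z + h z)
    -- random iterates, estimators and adaptive matrices:
    (x : ℕ → Ω → EuclideanSpace ℝ (Fin d)) (y : ℕ → Ω → EuclideanSpace ℝ (Fin p))
    (w : ℕ → Ω → EuclideanSpace ℝ (Fin d)) (v : ℕ → Ω → EuclideanSpace ℝ (Fin p))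
    (A : ℕ → Ω → (EuclideanSpace ℝ (Fin d) →L[ℝ] EuclideanSpace ℝ (Fin d)))
    (B : ℕ → Ω → (EuclideanSpace ℝ (Fin p) →L[ℝ] EuclideanSpace ℝ (Fin p)))
    (hAsymm : ∀ t ω v' w', ⟪A t ω v', w'⟫ = ⟪v', A t ω w'⟫)
    (hApos : ∀ t ω v', ρ * ‖v'‖ ^ 2 ≤ ⟪A t ω v', v'⟫)
    (hBsymm : ∀ t ω v' w', ⟪B t ω v', w'⟫ = ⟪v', B t ω w'⟫)
    (hBl : ∀ t ω v', ρ * ‖v'‖ ^ 2 ≤ ⟪B t ω v', v'⟫)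
    (hBu : ∀ t ω v', ⟪B t ω v', v'⟫ ≤ ρu * ‖v'‖ ^ 2)
    -- deterministic initialization:
    (x0 : EuclideanSpace ℝ (Fin d)) (y0 : EuclideanSpace ℝ (Fin p))
    (hx0 : ∀ ω, x 0 ω = x0) (hy0 : ∀ ω, y 0 ω = y0)
    -- the AdaVSPAG updates:
    (hx : ∀ t ω z, ⟪w t ω, x (t + 1) ω⟫
        + (1 / (2 * γ)) * ⟪A t ω (x (t + 1) ω - x t ω), x (t + 1) ω - x t ω⟫
        + h (x (t + 1) ω)
      ≤ ⟪w t ω, z⟫ + (1 / (2 * γ)) * ⟪A t ω (z - x t ω), z - x t ω⟫ + h z)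
    (hy : ∀ t ω, B t ω (y t ω - y (t + 1) ω) = lam • v t ω)
    -- integrability of the relevant quantities:
    (hIntΔ : ∀ t, Integrable (fun ω =>
      ‖x (t + 1) ω - x t ω‖ ^ 2 + ‖y (t + 1) ω - y t ω‖ ^ 2) μP)
    (hintg : ∀ t, Integrable (fun ω => g (x t ω) (y t ω) - G (x t ω)) μP)
    (hintv : ∀ t, Integrable (fun ω => ‖v t ω - gy (x t ω) (y t ω)‖ ^ 2) μP)
    (hintw : ∀ t, Integrable (fun ω => ‖w t ω - F' (x t ω)‖ ^ 2) μP)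
    -- epoch-wise variance-reduction error bounds with `b = q` and epoch start
    -- `s_t = q⌊t/q⌋` (Lemmas B2 and B3):
    (hv : ∀ t, ∫ ω, ‖v t ω - gy (x t ω) (y t ω)‖ ^ 2 ∂μP
      ≤ (2 * Lg ^ 2 / q) * ∑ i ∈ Finset.Ico (q * (t / q)) t,
          (∫ ω, (‖x (i + 1) ω - x i ω‖ ^ 2 + ‖y (i + 1) ω - y i ω‖ ^ 2) ∂μP)
        + σ ^ 2 / n)
    (hw : ∀ t, ∫ ω, ‖w t ω - F' (x t ω)‖ ^ 2 ∂μP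
      ≤ (4 * Lhat ^ 2 / q) * ∑ i ∈ Finset.Ico (q * (t / q)) t,
          (∫ ω, (‖x (i + 1) ω - x i ω‖ ^ 2 + ‖y (i + 1) ω - y i ω‖ ^ 2) ∂μP)
        + (4 * Lhat ^ 2 / μ) * (∫ ω, (g (x t ω) (y t ω) - G (x t ω)) ∂μP)
        + Lbrev ^ 2 * σ ^ 2 / n)
    -- step sizes:
    (hγ : 0 < γ) (hγ1 : γ ≤ 3 * ρ / (4 * LF))
    (hγ2 : γ ≤ 4 * ρ * μ ^ 2 * lam / (19 * Lhat ^ 2 * ρu))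
    (hγ3 : γ ≤ ρ / (2 * Real.sqrt 38 * Lhat ^ 2))
    (hγ4 : γ ≤ ρ / (38 * ρu * lam * Lhat ^ 2))
    (hγ5 : γ ≤ lam * ρ * ρu / 4)
    (hγ6 : γ ≤ lam * μ * ρ / (16 * LG * ρu))
    (hγ7 : γ ≤ μ * ρ / (16 * Lg ^ 2 * ρu))
    (hlam : 0 < lam) (hlam1 : lam ≤ 1 / (2 * Lg * ρu))
    (hlam2 : lam ≤ Real.sqrt ρ / (4 * Real.sqrt ρu * Lg))
    -- the exact-gradient proximal step defining the gradient mapping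
    -- `𝒢(x_t,∇F(x_t),γ) = (x_t − x̄_{t+1})/γ`:
    (xbar : ℕ → Ω → EuclideanSpace ℝ (Fin d))
    (hxbar : ∀ t ω z, ⟪F' (x t ω), xbar t ω⟫
        + (1 / (2 * γ)) * ⟪A t ω (xbar t ω - x t ω), xbar t ω - x t ω⟫ + h (xbar t ω)
      ≤ ⟪F' (x t ω), z⟫ + (1 / (2 * γ)) * ⟪A t ω (z - x t ω), z - x t ω⟫ + h z)
    (hintG : ∀ t, Integrable (fun ω => ‖γ⁻¹ • (x t ω - xbar t ω)‖ ^ 2) μP) :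
    (1 / (T : ℝ)) * ∑ t ∈ Finset.range T, (∫ ω, ‖γ⁻¹ • (x t ω - xbar t ω)‖ ^ 2 ∂μP)
      ≤ 32 * (F x0 + h x0 - Φstar + (g x0 y0 - G x0)) / (3 * T * γ * ρ)
        + 38 * Lbrev ^ 2 * σ ^ 2 / (3 * ρ ^ 2 * n)
        + 32 * lam * σ ^ 2 / (3 * ρ ^ 2 * γ * n) := by
  have hLg : 0 < Lg := lt_of_lt_of_le hμ hμLg
  obtain ⟨s1, s2, s3, s4⟩ := aux_steps μ Lg LG Lhat ρ ρu γ lam hμ hμLg hLG hLhat hρ hρ1 hρu hρρu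
    hγ hγ2 hγ6 hlam hlam2
  obtain ⟨C, hC⟩ : ∃ C, C = 4 * Lhat ^ 2 * (γ / ρ) + 2 * Lg ^ 2 * (lam / ρ) := ⟨_, rfl⟩
  obtain ⟨c, hc⟩ : ∃ c, c = 4 * Lhat ^ 2 / μ * (γ / ρ) := ⟨_, rfl⟩
  rw [← hC] at s2 s3
  rw [← hc] at s1
  -- one-step bound
  have step : ∀ t ω,
      (3 * γ * ρ / 32) * ‖γ⁻¹ • (x t ω - xbar t ω)‖ ^ 2
        + C * (‖x (t + 1) ω - x t ω‖ ^ 2 + ‖y (t + 1) ω - y t ω‖ ^ 2)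
        + c * (g (x t ω) (y t ω) - G (x t ω))
        - (γ / ρ) * ‖w t ω - F' (x t ω)‖ ^ 2
        - (lam / ρ) * ‖v t ω - gy (x t ω) (y t ω)‖ ^ 2
      ≤ (F (x t ω) + h (x t ω) + (g (x t ω) (y t ω) - G (x t ω)))
        - (F (x (t + 1) ω) + h (x (t + 1) ω)
          + (g (x (t + 1) ω) (y (t + 1) ω) - G (x (t + 1) ω))) := by
    intro t ω
    have a1 := aux_phi (A t ω) (hAsymm t ω) ρ γ LF hρ hγ hγ1 (hApos t ω) h hconv F F' hF hFlip
      (w t ω) (x t ω) (x (t + 1) ω) (xbar t ω) (hx t ω) (hxbar t ω)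
    have a2 := aux_theta μ Lg LG ρ ρu γ lam C c hμ hLg hρ hρu hγ hlam g gx gy hgx hgy
      hgxlipy hgxlipx hgylipy G ystar hPL hQG hGgrad hGlip (B t ω) (hBsymm t ω) (hBl t ω)
      (hBu t ω) (x t ω) (x (t + 1) ω) (y t ω) (y (t + 1) ω) (v t ω) (hy t ω) s1 s2 s3 s4
    linarith
  -- telescoping
  have tele : ∀ ω, ∑ t ∈ Finset.range T,
      ((3 * γ * ρ / 32) * ‖γ⁻¹ • (x t ω - xbar t ω)‖ ^ 2
        + C * (‖x (t + 1) ω - x t ω‖ ^ 2 + ‖y (t + 1) ω - y t ω‖ ^ 2)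
        + c * (g (x t ω) (y t ω) - G (x t ω))
        - (γ / ρ) * ‖w t ω - F' (x t ω)‖ ^ 2
        - (lam / ρ) * ‖v t ω - gy (x t ω) (y t ω)‖ ^ 2)
      ≤ F x0 + h x0 - Φstar + (g x0 y0 - G x0) := by
    intro ω
    have h1 := Finset.sum_le_sum (fun t (_ : t ∈ Finset.range T) => step t ω)
    rw [Finset.sum_range_sub' (fun t => F (x t ω) + h (x t ω)
      + (g (x t ω) (y t ω) - G (x t ω)))] at h1
    simp only [hx0 ω, hy0 ω] at h1
    have h2 := hΦstar (x T ω)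
    have h3 := hGlow (x T ω) (y T ω)
    linarith
  have hInt : ∀ t, Integrable (fun ω => (3 * γ * ρ / 32) * ‖γ⁻¹ • (x t ω - xbar t ω)‖ ^ 2
        + C * (‖x (t + 1) ω - x t ω‖ ^ 2 + ‖y (t + 1) ω - y t ω‖ ^ 2)
        + c * (g (x t ω) (y t ω) - G (x t ω))
        - (γ / ρ) * ‖w t ω - F' (x t ω)‖ ^ 2
        - (lam / ρ) * ‖v t ω - gy (x t ω) (y t ω)‖ ^ 2) μP := fun t =>
    (((((hintG t).const_mul _).add ((hIntΔ t).const_mul _)).add ((hintg t).const_mul _)).sub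
      ((hintw t).const_mul _)).sub ((hintv t).const_mul _)
  have hintegral : ∀ t, ∫ ω, ((3 * γ * ρ / 32) * ‖γ⁻¹ • (x t ω - xbar t ω)‖ ^ 2
        + C * (‖x (t + 1) ω - x t ω‖ ^ 2 + ‖y (t + 1) ω - y t ω‖ ^ 2)
        + c * (g (x t ω) (y t ω) - G (x t ω))
        - (γ / ρ) * ‖w t ω - F' (x t ω)‖ ^ 2
        - (lam / ρ) * ‖v t ω - gy (x t ω) (y t ω)‖ ^ 2) ∂μP
      = (3 * γ * ρ / 32) * (∫ ω, ‖γ⁻¹ • (x t ω - xbar t ω)‖ ^ 2 ∂μP)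
        + C * (∫ ω, (‖x (t + 1) ω - x t ω‖ ^ 2 + ‖y (t + 1) ω - y t ω‖ ^ 2) ∂μP)
        + c * (∫ ω, (g (x t ω) (y t ω) - G (x t ω)) ∂μP)
        - (γ / ρ) * (∫ ω, ‖w t ω - F' (x t ω)‖ ^ 2 ∂μP)
        - (lam / ρ) * (∫ ω, ‖v t ω - gy (x t ω) (y t ω)‖ ^ 2 ∂μP) := by
    intro t
    exact aux_integral μP (hintG t) (hIntΔ t) (hintg t) (hintw t) (hintv t) _ _ _ _ _
  have tot : ∑ t ∈ Finset.range T,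
      ((3 * γ * ρ / 32) * (∫ ω, ‖γ⁻¹ • (x t ω - xbar t ω)‖ ^ 2 ∂μP)
        + C * (∫ ω, (‖x (t + 1) ω - x t ω‖ ^ 2 + ‖y (t + 1) ω - y t ω‖ ^ 2) ∂μP)
        + c * (∫ ω, (g (x t ω) (y t ω) - G (x t ω)) ∂μP)
        - (γ / ρ) * (∫ ω, ‖w t ω - F' (x t ω)‖ ^ 2 ∂μP)
        - (lam / ρ) * (∫ ω, ‖v t ω - gy (x t ω) (y t ω)‖ ^ 2 ∂μP))
      ≤ F x0 + h x0 - Φstar + (g x0 y0 - G x0) := by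
    have h1 := integral_mono (integrable_finsetSum (Finset.range T) (fun t _ => hInt t))
      (integrable_const (F x0 + h x0 - Φstar + (g x0 y0 - G x0))) tele
    rw [integral_finsetSum _ (fun t _ => hInt t)] at h1
    simp only [hintegral] at h1
    simpa using h1
  clear tele step hInt hintegral
  generalize F x0 + h x0 - Φstar + (g x0 y0 - G x0) = K at tot ⊢
  obtain ⟨D, hD⟩ : ∃ D : ℕ → ℝ, ∀ t, D t
    = ∫ ω, (‖x (t + 1) ω - x t ω‖ ^ 2 + ‖y (t + 1) ω - y t ω‖ ^ 2) ∂μP := ⟨_, fun _ => rfl⟩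
  obtain ⟨Q, hQ⟩ : ∃ Q : ℕ → ℝ, ∀ t, Q t
    = ∫ ω, ‖γ⁻¹ • (x t ω - xbar t ω)‖ ^ 2 ∂μP := ⟨_, fun _ => rfl⟩
  obtain ⟨P, hP⟩ : ∃ P : ℕ → ℝ, ∀ t, P t
    = ∫ ω, (g (x t ω) (y t ω) - G (x t ω)) ∂μP := ⟨_, fun _ => rfl⟩
  obtain ⟨U, hU⟩ : ∃ U : ℕ → ℝ, ∀ t, U t
    = ∫ ω, ‖w t ω - F' (x t ω)‖ ^ 2 ∂μP := ⟨_, fun _ => rfl⟩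
  obtain ⟨V, hV⟩ : ∃ V : ℕ → ℝ, ∀ t, V t
    = ∫ ω, ‖v t ω - gy (x t ω) (y t ω)‖ ^ 2 ∂μP := ⟨_, fun _ => rfl⟩
  have hD0 : ∀ t, 0 ≤ D t := fun t => by
    rw [hD]; exact integral_nonneg (fun ω => by positivity)
  simp only [← hD, ← hQ, ← hP, ← hU, ← hV] at tot hv hw ⊢
  have hqR : (0:ℝ) < q := by exact_mod_cast hq
  have hnR : (0:ℝ) < n := by exact_mod_cast hn
  have hTR : (0:ℝ) < T := by exact_mod_cast hT
  have ep := aux_epoch q T hq D hD0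
  have ep' : (1 / (q:ℝ)) * ∑ t ∈ Finset.range T, ∑ i ∈ Finset.Ico (q * (t / q)) t, D i
      ≤ ∑ t ∈ Finset.range T, D t := by
    rw [one_div, inv_mul_le_iff₀ hqR]; exact ep
  have sv : ∑ t ∈ Finset.range T, V t
      ≤ 2 * Lg ^ 2 * ∑ t ∈ Finset.range T, D t + T * (σ ^ 2 / n) := by
    have h1 := Finset.sum_le_sum (fun t (_ : t ∈ Finset.range T) => hv t)
    rw [Finset.sum_add_distrib, ← Finset.mul_sum, Finset.sum_const, Finset.card_range,
      nsmul_eq_mul] at h1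
    have h2 := mul_le_mul_of_nonneg_left ep' (by positivity : 0 ≤ 2 * Lg ^ 2)
    rw [← mul_assoc, mul_one_div] at h2
    linarith
  have sw : ∑ t ∈ Finset.range T, U t
      ≤ 4 * Lhat ^ 2 * ∑ t ∈ Finset.range T, D t
        + 4 * Lhat ^ 2 / μ * ∑ t ∈ Finset.range T, P t + T * (Lbrev ^ 2 * σ ^ 2 / n) := by
    have h1 := Finset.sum_le_sum (fun t (_ : t ∈ Finset.range T) => hw t)
    rw [Finset.sum_add_distrib, Finset.sum_add_distrib, ← Finset.mul_sum, ← Finset.mul_sum,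
      Finset.sum_const, Finset.card_range, nsmul_eq_mul] at h1
    have h2 := mul_le_mul_of_nonneg_left ep' (by positivity : 0 ≤ 4 * Lhat ^ 2)
    rw [← mul_assoc, mul_one_div] at h2
    linarith
  rw [Finset.sum_sub_distrib, Finset.sum_sub_distrib, Finset.sum_add_distrib,
    Finset.sum_add_distrib] at tot
  simp only [← Finset.mul_sum] at tot
  have sv' := mul_le_mul_of_nonneg_left sv (by positivity : 0 ≤ lam / ρ)
  have sw' := mul_le_mul_of_nonneg_left sw (by positivity : 0 ≤ γ / ρ)
  have main : (3 * γ * ρ / 32) * ∑ t ∈ Finset.range T, Q t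
      ≤ K + T * ((γ / ρ) * (Lbrev ^ 2 * σ ^ 2 / n) + (lam / ρ) * (σ ^ 2 / n)) := by
    rw [hC, hc] at tot
    linarith
  have main2 := mul_le_mul_of_nonneg_left main (by positivity : 0 ≤ 32 / (3 * γ * ρ) * (1 / (T:ℝ)))
  have e1 : 32 / (3 * γ * ρ) * (1 / (T:ℝ)) * ((3 * γ * ρ / 32) * ∑ t ∈ Finset.range T, Q t)
      = (1 / (T:ℝ)) * ∑ t ∈ Finset.range T, Q t := by
    field_simp
  have e2 : 32 / (3 * γ * ρ) * (1 / (T:ℝ))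
      * (K + T * ((γ / ρ) * (Lbrev ^ 2 * σ ^ 2 / n) + (lam / ρ) * (σ ^ 2 / n)))
      = 32 * K / (3 * T * γ * ρ) + 32 * Lbrev ^ 2 * σ ^ 2 / (3 * ρ ^ 2 * n)
        + 32 * lam * σ ^ 2 / (3 * ρ ^ 2 * γ * n) := by
    field_simp
    try ring
  rw [e1, e2] at main2
  have e3 : 32 * Lbrev ^ 2 * σ ^ 2 / (3 * ρ ^ 2 * n) ≤ 38 * Lbrev ^ 2 * σ ^ 2 / (3 * ρ ^ 2 * n) := by
    gcongr
    norm_num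
  linarith
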